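/- Let {A'_{a|x}} be an assemblage admitting a local hidden state model with ensemble {(P(ξ), σ_ξ)}_{ξ∈Ξ}. Suppose for one measurement x₀ with outcomes a = 1,…,n there are unit vectors β_1,…,β_n with pairwise distinct projections |β_a⟩⟨β_a| and p_1,…,p_n > 0 with Σ_a p_a = 1 such that A'_{a|x₀} = p_a|β_a⟩⟨β_a| for each a. Then the hidden state ensemble is forced to be exactly {(p_a, |β_a⟩⟨β_a|)}: every ξ with P(ξ) > 0 satisfies σ_ξ = |β_a⟩⟨β_a| for some a, and Σ_{ξ : σ_ξ = |β_a⟩⟨β_a|} P(ξ) = p_a for every a. -/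

import Mathlib

/-!
Pure states span extreme rays of the positive cone: if positive semidefinite matrices sum to a
multiple of `|u⟩⟨u|`, each summand vanishes on the complement `u⊥`, hence is itself a multiple of
`|u⟩⟨u|`. So a hidden state contributing to outcome `a` of `x₀` must be `|β a⟩⟨β a|`. As the
projections are distinct, each hidden state of positive weight responds to `x₀` deterministically,
and the trace of `A'_{a|x₀}` counts the total weight of the hidden states equal to `|β a⟩⟨β a|`.
-/

open scoped BigOperators Kronecker Classical ComplexOrder

namespace EPR

noncomputable section

/-- Complex inner product `⟨u, v⟩ = ∑ conj (u a) * v a` (conjugate-linear in the first slot). -/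
def cinner {ι : Type*} [Fintype ι] (u v : ι → ℂ) : ℂ :=
  ∑ a, (starRingEnd ℂ) (u a) * v a

/-- `u` is a unit vector. -/
def IsUnitVec {ι : Type*} [Fintype ι] (u : ι → ℂ) : Prop := cinner u u = 1

/-- Rank-one projection `|u⟩⟨u|`, with entries `u k * conj (u l)`. -/
def proj {ι : Type*} [Fintype ι] (u : ι → ℂ) : Matrix ι ι ℂ :=
  Matrix.of fun k l => u k * (starRingEnd ℂ) (u l)

/-- Rank-one operator `|u⟩⟨v|`, with entries `u k * conj (v l)`. -/
def outer {ι : Type*} [Fintype ι] (u v : ι → ℂ) : Matrix ι ι ℂ :=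
  Matrix.of fun k l => u k * (starRingEnd ℂ) (v l)

/-- A state: positive semidefinite matrix of trace 1. -/
def IsState {ι : Type*} [Fintype ι] (ρ : Matrix ι ι ℂ) : Prop :=
  ρ.PosSemidef ∧ ρ.trace = 1

/-- An effect: `0 ≤ E ≤ I` in the Loewner order. -/
def IsEffect {d : ℕ} (E : Matrix (Fin d) (Fin d) ℂ) : Prop :=
  E.PosSemidef ∧ (1 - E).PosSemidef

/-- Conditional state `Tr_A[ρ (E ⊗ I_B)]` of a bipartite state for an effect `E` on A:
entries `(E')_{b b'} = ∑_{a,a'} E_{a' a} ρ_{(a,b),(a',b')}`. -/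
def condStateE {dA dB : ℕ} (ρ : Matrix (Fin dA × Fin dB) (Fin dA × Fin dB) ℂ)
    (E : Matrix (Fin dA) (Fin dA) ℂ) : Matrix (Fin dB) (Fin dB) ℂ :=
  Matrix.of fun b b' => ∑ a, ∑ a', E a' a * ρ (a, b) (a', b')

/-- Conditional state `Tr_A[ρ (|α⟩⟨α| ⊗ I_B)]` for a non-degenerate projective effect:
entries `∑_{a,a'} conj (α a) * α a' * ρ_{(a,b),(a',b')}`. -/
def condState {dA dB : ℕ} (ρ : Matrix (Fin dA × Fin dB) (Fin dA × Fin dB) ℂ)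
    (α : Fin dA → ℂ) : Matrix (Fin dB) (Fin dB) ℂ :=
  Matrix.of fun b b' => ∑ a, ∑ a', (starRingEnd ℂ) (α a) * α a' * ρ (a, b) (a', b')

/-- Tensor product vector `α ⊗ β` in `ℂ^{dA} ⊗ ℂ^{dB}`. -/
def tensor2 {dA dB : ℕ} (α : Fin dA → ℂ) (β : Fin dB → ℂ) : Fin dA × Fin dB → ℂ :=
  fun p => α p.1 * β p.2

/-- Tensor product vector `α ⊗ β ⊗ γ` in `ℂ^{dA} ⊗ ℂ^{dB} ⊗ ℂ^{dC}`. -/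
def tensor3 {dA dB dC : ℕ} (α : Fin dA → ℂ) (β : Fin dB → ℂ) (γ : Fin dC → ℂ) :
    Fin dA × Fin dB × Fin dC → ℂ :=
  fun p => α p.1 * β p.2.1 * γ p.2.2

/-- Reduced state of a tripartite pure state on AB:
`(ρ_Ψ)_{(a,b),(a',b')} = ∑_c Ψ_{a,b,c} conj (Ψ_{a',b',c})`. -/
def reducedAB {dA dB dC : ℕ} (Ψ : Fin dA × Fin dB × Fin dC → ℂ) :
    Matrix (Fin dA × Fin dB) (Fin dA × Fin dB) ℂ :=
  Matrix.of fun p q => ∑ c, Ψ (p.1, p.2, c) * (starRingEnd ℂ) (Ψ (q.1, q.2, c))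

/-- Partial contraction `⟨α|Ψ⟩ ∈ ℂ^{dB} ⊗ ℂ^{dC}`, with components
`∑_a conj (α a) Ψ_{a,b,c}`. -/
def aContract {dA dB dC : ℕ} (α : Fin dA → ℂ) (Ψ : Fin dA × Fin dB × Fin dC → ℂ) :
    Fin dB × Fin dC → ℂ :=
  fun p => ∑ a, (starRingEnd ℂ) (α a) * Ψ (a, p.1, p.2)

/-- A family of vectors is orthonormal. For `n = d` this is an orthonormal basis of `ℂ^d`. -/
def OrthonormalFam {d n : ℕ} (α : Fin n → Fin d → ℂ) : Prop :=
  ∀ i j, cinner (α i) (α j) = if i = j then 1 else 0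

/-- `ρ` is unsteerable from Alice's side for non-degenerate projective measurements:
there is a finite local-hidden-state ensemble reproducing all conditional states of
every non-degenerate projective measurement (orthonormal basis) on A. -/
def Unsteerable {dA dB : ℕ} (ρ : Matrix (Fin dA × Fin dB) (Fin dA × Fin dB) ℂ) : Prop :=
  ∃ (n : ℕ) (P : Fin n → ℝ) (σ : Fin n → Matrix (Fin dB) (Fin dB) ℂ),
    (∀ ξ, 0 ≤ P ξ) ∧ (∑ ξ, P ξ = 1) ∧ (∀ ξ, IsState (σ ξ)) ∧
    ∀ α : Fin dA → Fin dA → ℂ, OrthonormalFam α →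
      ∃ Q : Fin dA → Fin n → ℝ,
        (∀ a ξ, 0 ≤ Q a ξ ∧ Q a ξ ≤ 1) ∧ (∀ ξ, ∑ a, Q a ξ = 1) ∧
        ∀ a, condState ρ (α a) = ∑ ξ, ((Q a ξ * P ξ : ℝ) : ℂ) • σ ξ

/-- `ρ` is separable: a finite convex-type combination of product states. -/
def Separable {dA dB : ℕ} (ρ : Matrix (Fin dA × Fin dB) (Fin dA × Fin dB) ℂ) : Prop :=
  ∃ (n : ℕ) (q : Fin n → ℝ) (ρA : Fin n → Matrix (Fin dA) (Fin dA) ℂ)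
    (ρB : Fin n → Matrix (Fin dB) (Fin dB) ℂ),
    (∀ k, 0 ≤ q k) ∧ (∀ k, IsState (ρA k)) ∧ (∀ k, IsState (ρB k)) ∧
    ρ = ∑ k, ((q k : ℂ)) • (ρA k ⊗ₖ ρB k)

/-- A local hidden state model for an assemblage `As`, with outcomes `A`, measurement
labels `X`, hidden states `σ` with weights `P`, and response probabilities `R`. -/
def LHSModel {dB : ℕ} {A X : Type*} [Fintype A] {n : ℕ}
    (As : A → X → Matrix (Fin dB) (Fin dB) ℂ)
    (P : Fin n → ℝ) (σ : Fin n → Matrix (Fin dB) (Fin dB) ℂ)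
    (R : A → X → Fin n → ℝ) : Prop :=
  (∀ ξ, 0 ≤ P ξ) ∧ (∑ ξ, P ξ = 1) ∧ (∀ ξ, IsState (σ ξ)) ∧
  (∀ a x ξ, 0 ≤ R a x ξ ∧ R a x ξ ≤ 1) ∧ (∀ x ξ, ∑ a, R a x ξ = 1) ∧
  (∀ a x, As a x = ∑ ξ, ((R a x ξ * P ξ : ℝ) : ℂ) • σ ξ)

/-- Standard basis vector of `ℂ^d`. -/
def stdb {d : ℕ} (a : Fin d) : Fin d → ℂ := fun i => if i = a then 1 else 0

section PureStates

open scoped Matrix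

variable {ι κ : Type*} [Fintype ι]

lemma cinner_eq_star_dotProduct (u v : ι → ℂ) : cinner u v = star u ⬝ᵥ v := rfl

lemma proj_eq_vecMulVec (u : ι → ℂ) : proj u = Matrix.vecMulVec u (star u) := rfl

lemma isHermitian_proj (u : ι → ℂ) : (proj u).IsHermitian := by
  rw [Matrix.IsHermitian, proj_eq_vecMulVec, Matrix.conjTranspose_vecMulVec, star_star]

lemma proj_mulVec (u v : ι → ℂ) : proj u *ᵥ v = cinner u v • u := by
  rw [proj_eq_vecMulVec, Matrix.vecMulVec_mulVec, op_smul_eq_smul, cinner_eq_star_dotProduct]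

lemma trace_proj (u : ι → ℂ) : (proj u).trace = cinner u u := by
  rw [proj_eq_vecMulVec, Matrix.trace_vecMulVec, dotProduct_comm, cinner_eq_star_dotProduct]

lemma proj_mul_mul_proj (u : ι → ℂ) (M : Matrix ι ι ℂ) :
    proj u * M * proj u = cinner u (M *ᵥ u) • proj u := by
  rw [Matrix.mul_assoc, proj_eq_vecMulVec, Matrix.mul_vecMulVec, Matrix.vecMulVec_mul_vecMulVec,
    Matrix.vecMulVec_smul, cinner_eq_star_dotProduct]

lemma cinner_sub_proj_mulVec {u : ι → ℂ} (hu : IsUnitVec u) (v : ι → ℂ) :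
    cinner u (v - proj u *ᵥ v) = 0 := by
  have huu : star u ⬝ᵥ u = 1 := hu
  rw [proj_mulVec, cinner_eq_star_dotProduct, cinner_eq_star_dotProduct, dotProduct_sub,
    dotProduct_smul, huu, smul_eq_mul, mul_one, sub_self]

lemma mul_proj_eq_self_of_mulVec_eq_zero {u : ι → ℂ} (hu : IsUnitVec u) {M : Matrix ι ι ℂ}
    (hker : ∀ v, cinner u v = 0 → M *ᵥ v = 0) : M * proj u = M := by
  refine Matrix.mulVec_injective (funext fun v => ?_)
  have hv := hker _ (cinner_sub_proj_mulVec hu v)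
  rw [Matrix.mulVec_sub, sub_eq_zero] at hv
  rw [← Matrix.mulVec_mulVec, ← hv]

lemma eq_trace_smul_proj_of_mulVec_eq_zero {u : ι → ℂ} (hu : IsUnitVec u) {M : Matrix ι ι ℂ}
    (hM : M.IsHermitian) (hker : ∀ v, cinner u v = 0 → M *ᵥ v = 0) : M = M.trace • proj u := by
  have hright : M * proj u = M := mul_proj_eq_self_of_mulVec_eq_zero hu hker
  have hleft : proj u * M = M := by
    simpa only [Matrix.conjTranspose_mul, (isHermitian_proj u).eq, hM.eq]
      using congrArg Matrix.conjTranspose hright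
  have hmul : M = cinner u (M *ᵥ u) • proj u := by
    rw [← proj_mul_mul_proj, hleft, hright]
  have htrace : M.trace = cinner u (M *ᵥ u) := by
    rw [congrArg Matrix.trace hmul, Matrix.trace_smul, trace_proj, hu, smul_eq_mul, mul_one]
  rwa [htrace]

lemma mulVec_eq_zero_of_hasSum {𝕜 : Type*} [RCLike 𝕜] {M : κ → Matrix ι ι 𝕜}
    {S : Matrix ι ι 𝕜} (hM : ∀ k, (M k).PosSemidef) (hsum : HasSum M S) {v : ι → 𝕜}
    (hv : S *ᵥ v = 0) (k : κ) : M k *ᵥ v = 0 := by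
  let quadForm : Matrix ι ι 𝕜 →+ 𝕜 :=
    { toFun := fun N => star v ⬝ᵥ N *ᵥ v
      map_zero' := by rw [Matrix.zero_mulVec, dotProduct_zero]
      map_add' := fun N N' => by rw [Matrix.add_mulVec, dotProduct_add] }
  have hcont : Continuous quadForm :=
    continuous_const.dotProduct (continuous_id.matrix_mulVec continuous_const)
  have hzero : HasSum (quadForm ∘ M) 0 := by
    simpa only [quadForm, AddMonoidHom.coe_mk, ZeroHom.coe_mk, hv, dotProduct_zero]
      using hsum.map quadForm hcont
  have hnonneg : ∀ k, 0 ≤ quadForm (M k) := fun k => (hM k).dotProduct_mulVec_nonneg v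
  exact ((hM k).dotProduct_mulVec_zero_iff v).1
    (congrFun ((hasSum_zero_iff_of_nonneg hnonneg).1 hzero) k)

lemma eq_trace_smul_proj_of_hasSum {M : κ → Matrix ι ι ℂ} (hM : ∀ k, (M k).PosSemidef)
    {u : ι → ℂ} (hu : IsUnitVec u) {q : ℂ} (hsum : HasSum M (q • proj u)) (k : κ) :
    M k = (M k).trace • proj u := by
  refine eq_trace_smul_proj_of_mulVec_eq_zero hu (hM k).isHermitian fun v hv => ?_
  refine mulVec_eq_zero_of_hasSum hM hsum ?_ k
  rw [Matrix.smul_mulVec, proj_mulVec, hv, zero_smul, smul_zero]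

lemma eq_proj_of_hasSum_smul {σ : κ → Matrix ι ι ℂ} (hσ : ∀ k, IsState (σ k)) {c : κ → ℝ}
    (hc : ∀ k, 0 ≤ c k) {u : ι → ℂ} (hu : IsUnitVec u) {q : ℂ}
    (hsum : HasSum (fun k => (c k : ℂ) • σ k) (q • proj u)) {k : κ} (hk : c k ≠ 0) :
    σ k = proj u := by
  have hpos : ∀ k, ((c k : ℂ) • σ k).PosSemidef := fun k =>
    (hσ k).1.smul (by exact_mod_cast hc k)
  have hray := eq_trace_smul_proj_of_hasSum hpos hu hsum k
  rw [Matrix.trace_smul, (hσ k).2, smul_eq_mul, mul_one] at hray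
  exact smul_right_injective _ (Complex.ofReal_ne_zero.2 hk) hray

lemma hasSum_of_hasSum_smul_of_trace_eq_one {σ : κ → Matrix ι ι ℂ}
    (hσ : ∀ k, (σ k).trace = 1) {ρ : Matrix ι ι ℂ} (hρ : ρ.trace = 1) {c : κ → ℝ} {q : ℝ}
    (hsum : HasSum (fun k => (c k : ℂ) • σ k) ((q : ℂ) • ρ)) : HasSum c q := by
  have htrace := hsum.map (Matrix.traceAddMonoidHom ι ℂ) continuous_id.matrix_trace
  simp only [Function.comp_def, Matrix.traceAddMonoidHom_apply, Matrix.trace_smul, hσ, hρ,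
    smul_eq_mul, mul_one] at htrace
  exact Complex.hasSum_ofReal.1 htrace

end PureStates

theorem stmt13_general {ι A Ξ : Type*} [Fintype ι] {P : Ξ → ℝ} (hP : ∀ ξ, 0 ≤ P ξ)
    {σ : Ξ → Matrix ι ι ℂ} (hσ : ∀ ξ, IsState (σ ξ))
    {R : A → Ξ → ℝ} (hR : ∀ a ξ, 0 ≤ R a ξ) (hR_sum : ∀ ξ, HasSum (fun a => R a ξ) 1)
    {β : A → ι → ℂ} (hβ : ∀ a, IsUnitVec (β a))
    (hdist : ∀ a b, a ≠ b → proj (β a) ≠ proj (β b)) {p : A → ℝ}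
    (h : ∀ a, HasSum (fun ξ => ((R a ξ * P ξ : ℝ) : ℂ) • σ ξ) ((p a : ℂ) • proj (β a))) :
    (∀ ξ, 0 < P ξ → ∃ a, σ ξ = proj (β a)) ∧
    (∀ a, HasSum (fun ξ => if σ ξ = proj (β a) then P ξ else 0) (p a)) := by
  have hzero : ∀ a ξ, σ ξ ≠ proj (β a) → R a ξ * P ξ = 0 := fun a ξ =>
    not_imp_comm.1 (eq_proj_of_hasSum_smul hσ (fun ξ => mul_nonneg (hR a ξ) (hP ξ)) (hβ a) (h a))
  have htotal : ∀ ξ, HasSum (fun a => R a ξ * P ξ) (P ξ) := fun ξ => by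
    simpa only [one_mul] using (hR_sum ξ).mul_right (P ξ)
  refine ⟨fun ξ hξ => ?_, fun a => ?_⟩
  · by_contra! hne
    have hnull : (fun a => R a ξ * P ξ) = 0 := funext fun a => hzero a ξ (hne a)
    exact hξ.ne' ((htotal ξ).unique (hnull ▸ hasSum_zero))
  · have hweights : HasSum (fun ξ => R a ξ * P ξ) (p a) :=
      hasSum_of_hasSum_smul_of_trace_eq_one (fun ξ => (hσ ξ).2) ((trace_proj _).trans (hβ a)) (h a)
    have hdet : ∀ ξ, R a ξ * P ξ = if σ ξ = proj (β a) then P ξ else 0 := fun ξ => by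
      split_ifs with hξ
      · refine (hasSum_single a fun b hb => hzero b ξ ?_).unique (htotal ξ)
        exact hξ ▸ hdist a b hb.symm
      · exact hzero a ξ hξ
    simpa only [hdet] using hweights

/-- if one measurement `x₀` of an assemblage with an LHS model has all
its members pure, `A'_{a|x₀} = p_a |β_a⟩⟨β_a|` with pairwise distinct projections and
`∑ p_a = 1`, then the hidden state ensemble is exactly `{(p_a, |β_a⟩⟨β_a|)}`. -/
theorem stmt13 {dB n nout : ℕ} {X : Type*}
    (As : Fin nout → X → Matrix (Fin dB) (Fin dB) ℂ)
    (P : Fin n → ℝ) (σ : Fin n → Matrix (Fin dB) (Fin dB) ℂ)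
    (R : Fin nout → X → Fin n → ℝ)
    (hmodel : LHSModel As P σ R) (x₀ : X)
    (β : Fin nout → Fin dB → ℂ) (hβ : ∀ a, IsUnitVec (β a))
    (hdist : ∀ a b, a ≠ b → proj (β a) ≠ proj (β b))
    (p : Fin nout → ℝ) (hp : ∀ a, 0 < p a) (hsum : ∑ a, p a = 1)
    (h : ∀ a, As a x₀ = (p a : ℂ) • proj (β a)) :
    (∀ ξ, 0 < P ξ → ∃ a, σ ξ = proj (β a)) ∧
    (∀ a, ∑ ξ ∈ Finset.univ.filter (fun ξ => σ ξ = proj (β a)), P ξ = p a) := by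
  obtain ⟨hP, -, hσ, hR, hR_sum, hAs⟩ := hmodel
  obtain ⟨hpure, hweight⟩ := stmt13_general hP hσ (fun a ξ => (hR a x₀ ξ).1)
    (fun ξ => hR_sum x₀ ξ ▸ hasSum_fintype _) hβ hdist
    fun a => (hAs a x₀).symm.trans (h a) ▸ hasSum_fintype _
  exact ⟨hpure, fun a => (Finset.sum_filter _ _).trans ((hasSum_fintype _).unique (hweight a))⟩

end

end EPR
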